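/- The minimum size of a set S ⊆ E that strongly connects G equals the number of necessary edges of G plus the minimum size of a set R of redundant edges such that every unsatisfied edge of G is provided a cycle by some edge of R. -/

import Mathlib

/-- A set `S` of directed edges strongly connects the vertex set `V`:
for every pair of vertices there is a directed path using only edges of `S`. -/
def StronglyConnects {V : Type*} (S : Set (V × V)) : Prop :=
  ∀ u v : V, Relation.ReflTransGen (fun a b => (a, b) ∈ S) u v

/-- The edges of the closed walk determined by the vertex list `c`
(consecutive pairs, wrapping around from the last vertex to the first). -/
def cycleEdges {V : Type*} (c : List V) : List (V × V) := c.zip (c.rotate 1)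

/-- `c` is a directed cycle of the graph with edge set `E`: a nonempty list of
distinct vertices all of whose consecutive (wrap-around) pairs are edges.
Its length (number of edges) is `c.length`. -/
def IsCycle {V : Type*} (E : Set (V × V)) (c : List V) : Prop :=
  c ≠ [] ∧ c.Nodup ∧ ∀ e ∈ cycleEdges c, e ∈ E

/-- An edge is redundant if deleting it leaves a strongly connected graph. -/
def Redundant {V : Type*} (E : Set (V × V)) (e : V × V) : Prop :=
  e ∈ E ∧ StronglyConnects (E \ {e})

/-- An edge is necessary if deleting it destroys strong connectivity. -/
def Necessary {V : Type*} (E : Set (V × V)) (e : V × V) : Prop :=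
  e ∈ E ∧ ¬ StronglyConnects (E \ {e})

/-- The set of necessary edges. -/
def necessarySet {V : Type*} (E : Set (V × V)) : Set (V × V) :=
  {e | Necessary E e}

/-- An edge `(u, v)` is unsatisfied if there is no directed path from `v`
back to `u` consisting only of necessary edges. -/
def Unsatisfied {V : Type*} (E : Set (V × V)) (e : V × V) : Prop :=
  e ∈ E ∧ ¬ Relation.ReflTransGen (fun a b => Necessary E (a, b)) e.2 e.1

/-- A redundant edge `r` provides a cycle for an unsatisfied edge `(u, v)` if
there is a directed path from `v` to `u` consisting of necessary edges and `r`. -/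
def ProvidesCycle {V : Type*} (E : Set (V × V)) (r : V × V) (e : V × V) : Prop :=
  Relation.ReflTransGen (fun a b => Necessary E (a, b) ∨ (a, b) = r) e.2 e.1

/-- `w` is a cut vertex: deleting `w` disconnects the underlying undirected graph,
i.e. some two vertices distinct from `w` are joined by no undirected path avoiding `w`. -/
def IsCutVertex {V : Type*} (E : Set (V × V)) (w : V) : Prop :=
  ∃ u v : V, u ≠ w ∧ v ≠ w ∧
    ¬ Relation.ReflTransGen
        (fun a b => a ≠ w ∧ b ≠ w ∧ ((a, b) ∈ E ∨ (b, a) ∈ E)) u v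

/-!
Every edge `(u, v)` of a strongly connected graph without cycles of length above 3 is closed up,
inside any strongly connecting `S`, by a path from `v` to `u` of at most two edges. If such a path
contains a single redundant edge, that edge provides a cycle for `(u, v)`; so it is enough to show
that no triangle has two redundant edges. Replacing an edge of a triangle by a path through
vertices outside it (an ear) would create a longer cycle, so there are no such paths. Two redundant
edges would force all three reversed edges to be present, so no path could leave the triangle at
one vertex and return at another, and every vertex outside it would hang on exactly one of its
vertices, which would be a cut vertex.
-/

section Paths

variable {V : Type*} {E : Set (V × V)}

theorem exists_nodup_isChain_of_reflTransGen {r : V → V → Prop} {x y : V}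
    (h : Relation.ReflTransGen r x y) (hne : x ≠ y) :
    ∃ l : List V, List.IsChain r (x :: (l ++ [y])) ∧ (x :: (l ++ [y])).Nodup := by
  induction h using Relation.ReflTransGen.head_induction_on with
  | refl => exact absurd rfl hne
  | @head x c hxc _ ih =>
    by_cases hcy : c = y
    · subst hcy
      exact ⟨[], by simpa using hxc, by simpa using hne⟩
    obtain ⟨l, hchain, hnodup⟩ := ih hcy
    by_cases hx : x ∈ c :: l
    · obtain ⟨s, t, hst⟩ := List.append_of_mem hx
      have hsuffix : x :: (t ++ [y]) <:+ c :: (l ++ [y]) :=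
        ⟨s, by simpa using congrArg (· ++ [y]) hst.symm⟩
      exact ⟨t, hchain.suffix hsuffix, hnodup.sublist hsuffix.sublist⟩
    · refine ⟨c :: l, hchain.cons_cons hxc, List.nodup_cons.2 ⟨?_, hnodup⟩⟩
      simpa [hne] using hx

theorem forall_mem_zip_iff_isChain (x z : V) (l : List V) :
    (∀ e ∈ (x :: l).zip (l ++ [z]), e ∈ E) ↔
      List.IsChain (fun a b => (a, b) ∈ E) (x :: (l ++ [z])) := by
  induction l generalizing x with
  | nil => simp
  | cons y l ih =>
    rw [List.cons_append, List.zip_cons_cons, List.forall_mem_cons, ih, List.isChain_cons_cons]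

theorem isCycle_cons_iff (x : V) (l : List V) :
    IsCycle E (x :: l) ↔
      (x :: l).Nodup ∧ List.IsChain (fun a b => (a, b) ∈ E) (x :: (l ++ [x])) := by
  rw [← forall_mem_zip_iff_isChain, IsCycle, cycleEdges, List.rotate_cons_succ, List.rotate_zero]
  simp only [ne_eq, reduceCtorEq, not_false_eq_true, true_and]

theorem isCycle_triple_iff {a b c : V} :
    IsCycle E [a, b, c] ↔
      (a ≠ b ∧ b ≠ c ∧ c ≠ a) ∧ (a, b) ∈ E ∧ (b, c) ∈ E ∧ (c, a) ∈ E := by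
  rw [isCycle_cons_iff]
  simp only [List.nodup_cons, List.mem_cons, List.not_mem_nil, or_false, not_or,
    List.cons_append, List.nil_append, List.isChain_cons_cons, List.isChain_singleton]
  grind

theorem IsCycle.rotate_triple {a b c : V} (h : IsCycle E [a, b, c]) :
    IsCycle E [b, c, a] := by
  rw [isCycle_triple_iff] at h ⊢
  tauto

end Paths

section Ears

variable {V : Type*} {E : Set (V × V)} {T : Set V}

/-- A directed path leads from `a` to `x` all of whose vertices after `a` lie outside `T`.
The start `a` may lie in `T`, so that this describes the way out along an ear of `T`. -/
def ReachesOutside (E : Set (V × V)) (T : Set V) (a x : V) : Prop :=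
  Relation.ReflTransGen (fun u v => (u, v) ∈ E ∧ v ∉ T) a x

/-- For `a b ∈ T`, possibly equal, this says that `T` has an ear from `a` to `b`: a directed walk
with at least one inner vertex, all of whose inner vertices lie outside `T`; `z` is the last. -/
def HasEar (E : Set (V × V)) (T : Set V) (a b : V) : Prop :=
  ∃ z ∉ T, ReachesOutside E T a z ∧ (z, b) ∈ E

theorem HasEar.exists_longer_cycle {a b : V} {l : List V} (hear : HasEar E T a b)
    (hcycle : IsCycle E (b :: (l ++ [a]))) (hT : ∀ v ∈ b :: (l ++ [a]), v ∈ T) :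
    ∃ c, IsCycle E c ∧ (b :: (l ++ [a])).length < c.length := by
  obtain ⟨z, hz, haz, hzb⟩ := hear
  have hne : a ≠ z := fun h => hz (h ▸ hT a (by simp))
  obtain ⟨m, hchain, hnodup⟩ := exists_nodup_isChain_of_reflTransGen haz hne
  have hout : ∀ v ∈ m ++ [z], v ∉ T := by
    -- As a transitive relation, avoiding `T` passes from the edges of a path to pairs of vertices.
    have : IsTrans V fun _ v => v ∉ T := ⟨fun _ _ _ _ h => h⟩
    exact fun v => List.rel_of_pairwise_cons (List.isChain_iff_pairwise.1
      (hchain.imp fun _ _ h => h.2))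
  obtain ⟨hnodup', hchain'⟩ := (isCycle_cons_iff b _).1 hcycle
  refine ⟨b :: (l ++ [a] ++ (m ++ [z])), (isCycle_cons_iff b _).2 ⟨?_, ?_⟩, by simp⟩
  · exact List.nodup_append.2 ⟨hnodup', hnodup.of_cons,
      fun v hv w hw hvw => hout w hw (hvw ▸ hT v hv)⟩
  · have hl : List.IsChain (fun u v => (u, v) ∈ E) (b :: (l ++ [a])) :=
      hchain'.left_of_append (l₁ := b :: (l ++ [a]))
    have hm : List.IsChain (fun u v => (u, v) ∈ E) (a :: (m ++ z :: [b])) :=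
      List.isChain_cons_split.2 ⟨hchain.imp fun _ _ h => h.1, by simpa using hzb⟩
    simpa using List.isChain_cons_split.2 ⟨hl, hm⟩

theorem not_hasEar_of_triangle (hcyc : ∀ c : List V, IsCycle E c → c.length ≤ 3) {a b c : V}
    (htri : IsCycle E [b, c, a]) (hT : {b, c, a} ⊆ T) : ¬ HasEar E T a b := by
  intro hear
  obtain ⟨d, hd, hlt⟩ := hear.exists_longer_cycle (l := [c]) htri fun v hv => hT (by simpa using hv)
  exact (hcyc d hd).not_gt hlt

theorem exists_mem_reachesOutside {a x : V} (ha : a ∈ T)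
    (h : Relation.ReflTransGen (fun u v => (u, v) ∈ E) a x) :
    ∃ b ∈ T, ReachesOutside E T b x := by
  induction h with
  | refl => exact ⟨a, ha, .refl⟩
  | @tail y z _ hyz ih =>
    by_cases hz : z ∈ T
    · exact ⟨z, hz, .refl⟩
    · obtain ⟨b, hb, hby⟩ := ih
      exact ⟨b, hb, hby.tail ⟨hyz, hz⟩⟩

theorem exists_reachesOutside_mem {x b : V} (hx : x ∉ T) (hb : b ∈ T)
    (h : Relation.ReflTransGen (fun u v => (u, v) ∈ E) x b) :
    ∃ c ∈ T, ∃ z ∉ T, ReachesOutside E T x z ∧ (z, c) ∈ E := by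
  induction h using Relation.ReflTransGen.head_induction_on with
  | refl => exact absurd hb hx
  | @head x y hxy _ ih =>
    by_cases hy : y ∈ T
    · exact ⟨y, hy, x, hx, .refl, hxy⟩
    · obtain ⟨c, hc, z, hz, hyz, hzc⟩ := ih hy
      exact ⟨c, hc, z, hz, hyz.head ⟨hxy, hy⟩, hzc⟩

theorem eq_of_reachesOutside (hconn : StronglyConnects E)
    (hear : ∀ a ∈ T, ∀ b ∈ T, HasEar E T a b → a = b) {a b x : V} (ha : a ∈ T) (hb : b ∈ T)
    (hx : x ∉ T) (hax : ReachesOutside E T a x) (hbx : ReachesOutside E T b x) : a = b := by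
  obtain ⟨c, hc, z, hz, hxz, hzc⟩ := exists_reachesOutside_mem hx ha (hconn x a)
  have hac : a = c := hear a ha c hc ⟨z, hz, hax.trans hxz, hzc⟩
  have hbc : b = c := hear b hb c hc ⟨z, hz, hbx.trans hxz, hzc⟩
  exact hac.trans hbc.symm

theorem exists_isCutVertex_of_forall_hasEar_eq (hconn : StronglyConnects E) (hT : T.Nontrivial)
    (hTV : T ≠ Set.univ) (hear : ∀ a ∈ T, ∀ b ∈ T, HasEar E T a b → a = b) :
    ∃ w, IsCutVertex E w := by
  obtain ⟨x, hx⟩ := (Set.ne_univ_iff_exists_notMem T).1 hTV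
  obtain ⟨t, ht⟩ := hT.nonempty
  obtain ⟨a, ha, hax⟩ := exists_mem_reachesOutside ht (hconn t x)
  obtain ⟨b, hb, hba⟩ := hT.exists_ne a
  refine ⟨a, x, b, fun h => hx (h ▸ ha), hba, fun hxb => ?_⟩
  suffices h : b ∉ T ∧ ReachesOutside E T a b from h.1 hb
  -- The vertices hanging on `a` are closed under adjacency away from `a`.
  clear hb hba
  induction hxb with
  | refl => exact ⟨hx, hax⟩
  | @tail y z _ hyz ih =>
    obtain ⟨hy, hay⟩ := ih
    obtain ⟨-, hza, hyz | hzy⟩ := hyz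
    · have hz : z ∉ T := fun hz => hza (hear a ha z hz ⟨y, hy, hay, hyz⟩).symm
      exact ⟨hz, hay.tail ⟨hyz, hz⟩⟩
    · have hcz : ∀ c ∈ T, ReachesOutside E T c z → c = a := fun c hc hcz =>
        eq_of_reachesOutside hconn hear hc ha hy (hcz.tail ⟨hzy, hy⟩) hay
      obtain ⟨c, hc, hcz'⟩ := exists_mem_reachesOutside ht (hconn t z)
      exact ⟨fun hz => hza (hcz z hz .refl), hcz c hc hcz' ▸ hcz'⟩

end Ears

section Triangles

variable {V : Type*} {E S : Set (V × V)}

/-- A directed path of at most two edges leads from `x` to `y`; its middle vertex, if any, lies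
outside `T`. -/
def HasShortPath (S : Set (V × V)) (T : Set V) (x y : V) : Prop :=
  (x, y) ∈ S ∨ ∃ w ∉ T, (x, w) ∈ S ∧ (w, y) ∈ S

theorem StronglyConnects.hasShortPath (hS : StronglyConnects S) (hSE : S ⊆ E)
    (hcyc : ∀ c : List V, IsCycle E c → c.length ≤ 3) {u v : V} (huv : (u, v) ∈ E) (hne : u ≠ v) :
    HasShortPath S {u, v} v u := by
  obtain ⟨l, hchain, hnodup⟩ := exists_nodup_isChain_of_reflTransGen (hS v u) hne.symm
  have hcycle : IsCycle E (v :: (l ++ [u])) := by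
    refine (isCycle_cons_iff v _).2 ⟨hnodup, ?_⟩
    rw [List.append_assoc]
    exact List.isChain_split (l₁ := v :: l).2 ⟨hchain.imp fun _ _ h => hSE h, by simpa using huv⟩
  have hlen := hcyc _ hcycle
  match l with
  | [] => exact Or.inl (by simpa using hchain)
  | [w] => exact Or.inr ⟨w, by grind, by simpa using hchain⟩
  | _ :: _ :: _ => grind

theorem Redundant.hasShortPath_triangle (hcyc : ∀ c : List V, IsCycle E c → c.length ≤ 3)
    {p q s : V} (htri : IsCycle E [p, q, s]) (hred : Redundant E (p, q)) :
    HasShortPath E {p, q, s} p s ∧ HasShortPath E {p, q, s} s q := by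
  obtain ⟨⟨-, hqs, hsp⟩, -, hqsE, hspE⟩ := isCycle_triple_iff.1 htri
  constructor
  · rcases hred.2.hasShortPath Set.sdiff_subset hcyc hspE hsp with h | ⟨w, hw, hpw, hws⟩
    · exact Or.inl h.1
    · have hwq : w ≠ q := fun h => hpw.2 (by simp [h])
      exact Or.inr ⟨w, by grind, hpw.1, hws.1⟩
  · rcases hred.2.hasShortPath Set.sdiff_subset hcyc hqsE hqs with h | ⟨w, hw, hsw, hwq⟩
    · exact Or.inl h.1
    · have hwp : w ≠ p := fun h => hwq.2 (by simp [h])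
      exact Or.inr ⟨w, by grind, hsw.1, hwq.1⟩

theorem mem_of_hasShortPath_triangle (hcyc : ∀ c : List V, IsCycle E c → c.length ≤ 3)
    {p q s : V} (htri : IsCycle E [p, q, s]) (hps : HasShortPath E {p, q, s} p s)
    (hsq : HasShortPath E {p, q, s} s q) (hqp : HasShortPath E {p, q, s} q p) : (p, s) ∈ E := by
  obtain ⟨⟨hpq, hqs, hsp⟩, -, -, hspE⟩ := isCycle_triple_iff.1 htri
  rcases hps with hps | ⟨a, ha, hpa, has⟩
  · exact hps
  exfalso
  have haq : (a, q) ∉ E := fun h => not_hasEar_of_triangle hcyc htri.rotate_triple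
    (T := {p, q, s}) (by grind) ⟨a, ha, .single ⟨hpa, ha⟩, h⟩
  have hqa : (q, a) ∉ E := fun h => not_hasEar_of_triangle hcyc htri.rotate_triple.rotate_triple
    (T := {p, q, s}) (by grind) ⟨a, ha, .single ⟨h, ha⟩, has⟩
  -- Hence the way back from `s` via `q` to `p` is an ear of the triangle `p → a → s → p`.
  have hpas : IsCycle E [p, a, s] := isCycle_triple_iff.2 (by grind)
  have hsq' : ReachesOutside E {p, a, s} s q := by
    rcases hsq with hsq | ⟨b, hb, hsb, hbq⟩
    · exact .single ⟨hsq, by grind⟩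
    · exact .tail (.single ⟨hsb, by grind⟩) ⟨hbq, by grind⟩
  have hear : HasEar E {p, a, s} s p := by
    rcases hqp with hqp | ⟨c, hc, hqc, hcp⟩
    · exact ⟨q, by grind, hsq', hqp⟩
    · exact ⟨c, by grind, hsq'.tail ⟨hqc, by grind⟩, hcp⟩
  exact not_hasEar_of_triangle hcyc hpas subset_rfl hear

theorem IsCycle.reverse_of_redundant (hcyc : ∀ c : List V, IsCycle E c → c.length ≤ 3)
    {p q s : V} (htri : IsCycle E [p, q, s]) (hpq : Redundant E (p, q))
    (hqs : Redundant E (q, s)) : IsCycle E [p, s, q] := by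
  have hrot : ({q, s, p} : Set V) = {p, q, s} := by grind
  have hrot' : ({s, p, q} : Set V) = {p, q, s} := by grind
  obtain ⟨hps, hsq⟩ := hpq.hasShortPath_triangle hcyc htri
  obtain ⟨hqp, -⟩ := hqs.hasShortPath_triangle hcyc htri.rotate_triple
  rw [hrot] at hqp
  have hpsE : (p, s) ∈ E := mem_of_hasShortPath_triangle hcyc htri hps hsq hqp
  have hqpE : (q, p) ∈ E := mem_of_hasShortPath_triangle hcyc htri.rotate_triple
    (hrot ▸ hqp) (hrot ▸ hps) (hrot ▸ hsq)
  have hsqE : (s, q) ∈ E := mem_of_hasShortPath_triangle hcyc htri.rotate_triple.rotate_triple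
    (hrot' ▸ hsq) (hrot' ▸ hqp) (hrot' ▸ hps)
  exact isCycle_triple_iff.2 (by grind [isCycle_triple_iff.1 htri])

theorem exists_isCutVertex_of_bidirected_triangle (hconn : StronglyConnects E)
    (hcyc : ∀ c : List V, IsCycle E c → c.length ≤ 3) (hcard : 3 < ENat.card V) {p q s : V}
    (htri : IsCycle E [p, q, s]) (hrev : IsCycle E [p, s, q]) : ∃ w, IsCutVertex E w := by
  obtain ⟨⟨hpq, hqs, hsp⟩, -⟩ := isCycle_triple_iff.1 htri
  refine exists_isCutVertex_of_forall_hasEar_eq (T := {p, q, s}) hconn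
    ⟨p, by simp, q, by simp, hpq⟩ ?_ fun a ha b hb hear => ?_
  · intro huniv
    have hthree : ({p, q, s} : Set V).encard = 3 :=
      Set.encard_eq_three.2 ⟨p, q, s, hpq, hsp.symm, hqs, rfl⟩
    rw [huniv, Set.encard_univ] at hthree
    exact hcard.ne' hthree
  · by_contra hab
    obtain ⟨c, hc, hbca⟩ : ∃ c ∈ ({p, q, s} : Set V), IsCycle E [b, c, a] := by
      rw [isCycle_triple_iff] at htri hrev
      simp only [isCycle_triple_iff]
      grind
    exact not_hasEar_of_triangle hcyc hbca (by grind) hear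

theorem IsCycle.not_redundant_of_redundant (hconn : StronglyConnects E)
    (hcyc : ∀ c : List V, IsCycle E c → c.length ≤ 3) (hcard : 3 < ENat.card V)
    (hcut : ∀ w : V, ¬ IsCutVertex E w) {p q s : V} (htri : IsCycle E [p, q, s])
    (hpq : Redundant E (p, q)) : ¬ Redundant E (q, s) := by
  intro hqs
  obtain ⟨w, hw⟩ := exists_isCutVertex_of_bidirected_triangle hconn hcyc hcard htri
    (htri.reverse_of_redundant hcyc hpq hqs)
  exact hcut w hw

end Triangles

section Covers

variable {V : Type*} {E R S : Set (V × V)}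

theorem redundant_iff {e : V × V} : Redundant E e ↔ e ∈ E \ necessarySet E := by
  simp only [Redundant, necessarySet, Necessary, Set.mem_sdiff, Set.mem_ofPred_eq]
  tauto

theorem StronglyConnects.mono (hS : StronglyConnects S) (hSE : S ⊆ E) : StronglyConnects E :=
  fun u v => Relation.ReflTransGen.mono (fun _ _ h => hSE h) _ _ (hS u v)

theorem StronglyConnects.necessarySet_subset (hS : StronglyConnects S) (hSE : S ⊆ E) :
    necessarySet E ⊆ S := by
  intro e he
  by_contra heS
  exact he.2 (hS.mono (Set.subset_sdiff_singleton hSE heS))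

theorem StronglyConnects.exists_providesCycle (hS : StronglyConnects S) (hSE : S ⊆ E)
    (hcyc : ∀ c : List V, IsCycle E c → c.length ≤ 3) (hcard : 3 < ENat.card V)
    (hcut : ∀ w : V, ¬ IsCutVertex E w) {e : V × V}
    (he : Unsatisfied E e) : ∃ r ∈ S \ necessarySet E, ProvidesCycle E r e := by
  obtain ⟨u, v⟩ := e
  obtain ⟨huv, hunsat⟩ := he
  have hne : u ≠ v := by
    rintro rfl
    exact hunsat .refl
  rcases hS.hasShortPath hSE hcyc huv hne with hvu | ⟨w, hw, hvw, hwu⟩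
  · exact ⟨(v, u), ⟨hvu, fun hn => hunsat (.single hn)⟩, .single (Or.inr rfl)⟩
  by_cases hvwN : Necessary E (v, w)
  · exact ⟨(w, u), ⟨hwu, fun hwuN => hunsat (.tail (.single hvwN) hwuN)⟩,
      .tail (.single (Or.inl hvwN)) (Or.inr rfl)⟩
  · have htri : IsCycle E [v, w, u] := isCycle_triple_iff.2 (by grind)
    have hwuN : Necessary E (w, u) := by
      by_contra hwuN
      exact htri.not_redundant_of_redundant (hS.mono hSE) hcyc hcard hcut
        (redundant_iff.2 ⟨hSE hvw, hvwN⟩) (redundant_iff.2 ⟨hSE hwu, hwuN⟩)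
    exact ⟨(v, w), ⟨hvw, hvwN⟩, .tail (.single (Or.inr rfl)) (Or.inl hwuN)⟩

theorem StronglyConnects.necessarySet_union_of_providesCycle (hconn : StronglyConnects E)
    (hR : ∀ e : V × V, Unsatisfied E e → ∃ r ∈ R, ProvidesCycle E r e) :
    StronglyConnects (necessarySet E ∪ R) := by
  have hback : ∀ a b, (a, b) ∈ E →
      Relation.ReflTransGen (fun x y => (x, y) ∈ necessarySet E ∪ R) b a := by
    intro a b hab
    by_cases hsat : Relation.ReflTransGen (fun x y => Necessary E (x, y)) b a
    · exact Relation.ReflTransGen.mono (fun _ _ => Or.inl) _ _ hsat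
    · obtain ⟨r, hr, hprov⟩ := hR (a, b) ⟨hab, hsat⟩
      exact Relation.ReflTransGen.mono (fun _ _ => Or.imp id fun h => h ▸ hr) _ _ hprov
  intro u v
  induction hconn v u with
  | refl => exact .refl
  | tail _ hbc ih => exact (hback _ _ hbc).trans ih

theorem setOf_ncard_stronglyConnects_eq_image [Finite V] (hconn : StronglyConnects E)
    (hprov : ∀ S ⊆ E, StronglyConnects S → ∀ e : V × V, Unsatisfied E e →
      ∃ r ∈ S \ necessarySet E, ProvidesCycle E r e) :
    {n : ℕ | ∃ S ⊆ E, StronglyConnects S ∧ S.ncard = n} =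
      ((necessarySet E).ncard + ·) '' {n : ℕ | ∃ R : Set (V × V), (∀ r ∈ R, Redundant E r) ∧
        (∀ e : V × V, Unsatisfied E e → ∃ r ∈ R, ProvidesCycle E r e) ∧ R.ncard = n} := by
  ext n
  constructor
  · rintro ⟨S, hSE, hS, rfl⟩
    refine ⟨_, ⟨S \ necessarySet E, fun r hr => redundant_iff.2 ⟨hSE hr.1, hr.2⟩,
      hprov S hSE hS, rfl⟩, ?_⟩
    exact (add_comm _ _).trans
      (Set.ncard_sdiff_add_ncard_of_subset (hS.necessarySet_subset hSE))
  · rintro ⟨_, ⟨R, hRred, hR, rfl⟩, rfl⟩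
    refine ⟨necessarySet E ∪ R, Set.union_subset (fun _ he => he.1) fun r hr => (hRred r hr).1,
      hconn.necessarySet_union_of_providesCycle hR, Set.ncard_union_eq ?_⟩
    exact Set.disjoint_right.2 fun r hr => (redundant_iff.1 (hRred r hr)).2

end Covers

/-- The minimum size of a strongly connecting subset of `E` equals
the number of necessary edges plus the minimum size of a set of redundant edges
providing a cycle for every unsatisfied edge. -/
theorem scss_min_eq {V : Type*} [Fintype V] (E : Set (V × V))
    (hconn : StronglyConnects E)
    (hcyc : ∀ c : List V, IsCycle E c → c.length ≤ 3)
    (hcard : 4 ≤ Fintype.card V)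
    (hcut : ∀ w : V, ¬ IsCutVertex E w) :
    sInf {n : ℕ | ∃ S : Set (V × V), S ⊆ E ∧ StronglyConnects S ∧ S.ncard = n} =
      (necessarySet E).ncard +
        sInf {n : ℕ | ∃ R : Set (V × V), (∀ r ∈ R, Redundant E r) ∧
          (∀ e : V × V, Unsatisfied E e → ∃ r ∈ R, ProvidesCycle E r e) ∧
          R.ncard = n} := by
  have hcard' : 3 < ENat.card V := by
    rw [ENat.card_eq_coe_fintype_card]
    exact_mod_cast hcard
  have hprov : ∀ S ⊆ E, StronglyConnects S →
      ∀ e, Unsatisfied E e → ∃ r ∈ S \ necessarySet E, ProvidesCycle E r e :=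
    fun S hSE hS _ => hS.exists_providesCycle hSE hcyc hcard' hcut
  rw [setOf_ncard_stronglyConnects_eq_image hconn hprov]
  refine (add_right_mono.map_isLeast (isLeast_csInf ?_)).csInf_eq
  exact ⟨_, E \ necessarySet E, fun _ => redundant_iff.2, hprov E subset_rfl hconn, rfl⟩
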